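/- arXiv:2511.05011 — 2 statements merged into one kernel-verified Lean document; each statement's English description precedes it below -/
import Mathlib

section
/- If ρ ∈ (0,1], λ > 0 and β ≥ ρ, then for all t ≥ 0 one has 0 ≤ E_{ρ,β}(-λ t^ρ) ≤ 1/Γ(β). -/
open Real Set

/-- The two-parameter Mittag-Leffler function `E_{ρ,β}(z) = ∑_{k=0}^∞ z^k / Γ(kρ + β)`. -/
noncomputable def mlE (ρ β z : ℝ) : ℝ := ∑' k : ℕ, z ^ k / Real.Gamma (k * ρ + β)

/-!
Euler's limit formula reads `1 / Γ(s) = lim (n + 1) n ^ (-s) [X ^ (n + 1)] (1 - X) ^ (-s)`.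
Inserting it term by term, `E_{ρ,β}(z)` is the limit of positive multiples of coefficients of
`∑ k, w ^ k (1 - X) ^ (-(β + k ρ)) = (1 - X) ^ (-(β - ρ)) / ((1 - X) ^ ρ - w)` with `w = z / n ^ ρ`.
When `0 < ρ ≤ 1` and `w ≤ 0`, the denominator is a positive constant minus a power series with
nonnegative coefficients, so its reciprocal has nonnegative coefficients; so has
`(1 - X) ^ (-(β - ρ))` when `β ≥ ρ`. Hence `E_{ρ,β}(z) ≥ 0` for `z ≤ 0`, and the upper bound follows
from `E_{ρ,β}(z) = 1 / Γ(β) + z E_{ρ,β+ρ}(z)`. The interchange of limit and sum is dominated, since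
Euler's sequence increases to `Γ(s)` for `s > 0`.
-/

open Filter Topology PowerSeries
open scoped PowerSeries.WithPiTopology

section PowerSeries

theorem coeff_mul_nonneg {R : Type*} [Semiring R] [PartialOrder R] [IsOrderedRing R]
    {f g : R⟦X⟧} (hf : ∀ n, 0 ≤ coeff n f) (hg : ∀ n, 0 ≤ coeff n g) (n : ℕ) :
    0 ≤ coeff n (f * g) := by
  rw [coeff_mul]
  exact Finset.sum_nonneg fun ij _ ↦ mul_nonneg (hf ij.1) (hg ij.2)

theorem coeff_inv_nonneg {K : Type*} [Field K] [LinearOrder K] [IsStrictOrderedRing K]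
    {f : K⟦X⟧} (hf₀ : 0 ≤ constantCoeff f) (hf : ∀ n, coeff (n + 1) f ≤ 0) (n : ℕ) :
    0 ≤ coeff n f⁻¹ := by
  induction n using Nat.strong_induction_on with
  | _ n ih =>
    rw [coeff_inv]
    split_ifs with hn
    · exact inv_nonneg.mpr hf₀
    · refine mul_nonneg_of_nonpos_of_nonpos (neg_nonpos.mpr (inv_nonneg.mpr hf₀))
        (Finset.sum_nonpos fun ij hij ↦ ?_)
      split_ifs with hlt
      · have hadd : ij.1 + ij.2 = n := Finset.HasAntidiagonal.mem_antidiagonal.mp hij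
        obtain ⟨i, hi⟩ := Nat.exists_eq_succ_of_ne_zero (show ij.1 ≠ 0 by omega)
        exact mul_nonpos_of_nonpos_of_nonneg (hi ▸ hf i) (ih ij.2 hlt)
      · exact le_rfl

theorem coeff_pow_eq_sum_choose {R : Type*} [CommRing R] (f : R⟦X⟧) (n k : ℕ) :
    coeff n (f ^ k) = ∑ i ∈ Finset.range (n + 1),
      k.choose i * constantCoeff f ^ (k - i) * coeff n ((f - C (constantCoeff f)) ^ i) := by
  have binomial : coeff n (f ^ k) = ∑ i ∈ Finset.range (k + 1),
      k.choose i * constantCoeff f ^ (k - i) * coeff n ((f - C (constantCoeff f)) ^ i) := by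
    conv_lhs => rw [← sub_add_cancel f (C (constantCoeff f)), add_pow, map_sum]
    refine Finset.sum_congr rfl fun i _ ↦ ?_
    rw [← map_pow, ← map_natCast (C (R := R)), mul_assoc, ← map_mul, coeff_mul_C]
    ring
  have coeff_eq_zero (i : ℕ) (hi : n < i) : coeff n ((f - C (constantCoeff f)) ^ i) = 0 :=
    coeff_of_lt_order n <| lt_of_lt_of_le (by exact_mod_cast hi)
      (le_order_pow_of_constantCoeff_eq_zero i (by simp))
  rw [binomial]
  obtain hnk | hkn := le_total n k
  · refine (Finset.sum_subset (by simpa using hnk) fun i _ hi ↦ ?_).symm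
    rw [coeff_eq_zero i (by simpa using hi), mul_zero]
  · refine Finset.sum_subset (by simpa using hkn) fun i _ hi ↦ ?_
    rw [Nat.choose_eq_zero_of_lt (by simpa using hi), Nat.cast_zero, zero_mul, zero_mul]

theorem summable_pow_of_norm_constantCoeff_lt_one {R : Type*} [NormedCommRing R]
    [HasSummableGeomSeries R] {f : R⟦X⟧} (hf : ‖constantCoeff f‖ < 1) : Summable (f ^ ·) := by
  refine (WithPiTopology.summable_iff_summable_coeff R).mpr fun n ↦ ?_
  refine (summable_congr (coeff_pow_eq_sum_choose f n)).mpr ?_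
  refine summable_sum fun i _ ↦ Summable.mul_right _ ?_
  rw [← summable_nat_add_iff i]
  simpa only [Nat.add_sub_cancel] using summable_choose_mul_geometric_of_norm_lt_one i hf

theorem hasSum_pow_inv_one_sub {K : Type*} [NormedField K] [HasSummableGeomSeries K] {f : K⟦X⟧}
    (hf : ‖constantCoeff f‖ < 1) : HasSum (f ^ ·) (1 - f)⁻¹ := by
  have hsum := summable_pow_of_norm_constantCoeff_lt_one hf
  have hne : constantCoeff (1 - f) ≠ 0 := by
    rw [map_sub, map_one, sub_ne_zero]
    intro hone
    rw [← hone, norm_one] at hf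
    exact hf.false
  rw [← (eq_inv_iff_mul_eq_one hne).mpr hsum.tsum_pow_mul_one_sub]
  exact hsum.hasSum

end PowerSeries

section OneSubPow

variable {R : Type*} [CommRing R] [BinomialRing R]

/-- The binomial power series `(1 - X) ^ r`, obtained from Mathlib's series for `(1 + X) ^ r` by
`X ↦ -X`; its coefficients at `r = -s` are those in Euler's limit formula for `1 / Γ(s)`. -/
noncomputable def oneSubPow (r : R) : R⟦X⟧ := rescale (-1) (binomialSeries R r)

theorem coeff_oneSubPow_neg (r : R) (n : ℕ) :
    coeff n (oneSubPow (-r)) = Ring.multichoose r n := by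
  rw [oneSubPow, coeff_rescale, binomialSeries_coeff, Ring.choose_neg', smul_eq_mul, mul_one,
    Units.smul_def, ← Int.cast_smul_eq_zsmul R, Int.cast_negOnePow_natCast, smul_eq_mul,
    ← mul_assoc, ← mul_pow, neg_one_mul, neg_neg, one_pow, one_mul]

theorem constantCoeff_oneSubPow (r : R) : constantCoeff (oneSubPow r) = 1 := by
  rw [← coeff_zero_eq_constantCoeff_apply, ← neg_neg r, coeff_oneSubPow_neg,
    Ring.multichoose_zero_right]

theorem oneSubPow_zero : oneSubPow (0 : R) = 1 := by
  simp [oneSubPow]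

theorem oneSubPow_add (r s : R) : oneSubPow (r + s) = oneSubPow r * oneSubPow s := by
  simp [oneSubPow]

theorem oneSubPow_natCast_mul (k : ℕ) (r : R) : oneSubPow (k * r) = oneSubPow r ^ k := by
  induction k with
  | zero => rw [Nat.cast_zero, zero_mul, oneSubPow_zero, pow_zero]
  | succ k ih => rw [Nat.cast_succ, add_one_mul, oneSubPow_add, ih, pow_succ]

theorem factorial_mul_multichoose (r : R) (n : ℕ) :
    n.factorial * Ring.multichoose r n = ∏ j ∈ Finset.range n, (r + j) := by
  rw [← nsmul_eq_mul, Ring.factorial_nsmul_multichoose_eq_ascPochhammer]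
  induction n with
  | zero => simp
  | succ n ih =>
    rw [ascPochhammer_succ_right, Polynomial.smeval_mul, ih, Finset.prod_range_succ]
    simp [Polynomial.smeval_add, Polynomial.smeval_natCast]

variable [LinearOrder R] [IsStrictOrderedRing R]

theorem multichoose_nonneg {r : R} (hr : 0 ≤ r) (n : ℕ) : 0 ≤ Ring.multichoose r n := by
  refine nonneg_of_mul_nonneg_right (a := (n.factorial : R)) ?_ (by positivity)
  rw [factorial_mul_multichoose]
  exact Finset.prod_nonneg fun j _ ↦ by positivity

theorem multichoose_neg_succ_nonpos {r : R} (hr₀ : 0 ≤ r) (hr₁ : r ≤ 1) (n : ℕ) :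
    Ring.multichoose (-r) (n + 1) ≤ 0 := by
  refine nonpos_of_mul_nonpos_right (a := ((n + 1).factorial : R)) ?_ (by positivity)
  rw [factorial_mul_multichoose, Finset.prod_range_succ', Nat.cast_zero, add_zero]
  refine mul_nonpos_of_nonneg_of_nonpos (Finset.prod_nonneg fun j _ ↦ ?_) (neg_nonpos.mpr hr₀)
  rw [Nat.cast_succ, neg_add_eq_sub, sub_nonneg]
  exact hr₁.trans (le_add_of_nonneg_left j.cast_nonneg)

end OneSubPow

section Resolvent

/-- The power series `(1 - X) ^ (-b) / (1 - z (1 - X) ^ (-ρ))`, whose coefficients approximate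
`E_{ρ,b}`. It is the sum of the geometric series `∑ k, z ^ k (1 - X) ^ (-(b + k ρ))` when `‖z‖ < 1`;
the formal inverse is `0` at `z = 1`. -/
noncomputable def mlSeries {K : Type*} [Field K] [BinomialRing K] (ρ b z : K) : K⟦X⟧ :=
  oneSubPow (-b) * (1 - C z * oneSubPow (-ρ))⁻¹

theorem hasSum_pow_mul_multichoose {K : Type*} [NormedField K] [HasSummableGeomSeries K]
    [BinomialRing K] (ρ b : K) {z : K} (hz : ‖z‖ < 1) (n : ℕ) :
    HasSum (fun k : ℕ ↦ z ^ k * Ring.multichoose (k * ρ + b) n) (coeff n (mlSeries ρ b z)) := by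
  have hconst : ‖constantCoeff (C z * oneSubPow (-ρ))‖ < 1 := by
    rwa [map_mul, constantCoeff_C, constantCoeff_oneSubPow, mul_one]
  have hgeom := (hasSum_pow_inv_one_sub hconst).mul_left (oneSubPow (-b))
  refine ((WithPiTopology.hasSum_iff_hasSum_coeff K).mp hgeom n).congr_fun fun k ↦ ?_
  rw [mul_pow, ← oneSubPow_natCast_mul, mul_left_comm, ← oneSubPow_add, ← map_pow, coeff_C_mul,
    ← coeff_oneSubPow_neg, neg_add_rev, mul_neg]

variable {K : Type*} [Field K] [BinomialRing K]

theorem mlSeries_eq_mul_inv (ρ b z : K) :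
    mlSeries ρ b z = oneSubPow (-(b - ρ)) * (oneSubPow ρ - C z)⁻¹ := by
  have hinv : oneSubPow (-ρ) * oneSubPow ρ = 1 := by
    rw [← oneSubPow_add, neg_add_cancel, oneSubPow_zero]
  have hone : constantCoeff (oneSubPow (-ρ)) ≠ 0 := by
    rw [constantCoeff_oneSubPow]
    exact one_ne_zero
  have hfactor : 1 - C z * oneSubPow (-ρ) = (oneSubPow ρ - C z) * oneSubPow (-ρ) := by
    rw [sub_mul, mul_comm (oneSubPow ρ), hinv]
  rw [mlSeries, hfactor, PowerSeries.mul_inv_rev, ← mul_assoc, neg_sub, sub_eq_neg_add ρ,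
    oneSubPow_add, ← (eq_inv_iff_mul_eq_one hone).mpr ((mul_comm _ _).trans hinv)]

theorem coeff_mlSeries_nonneg [LinearOrder K] [IsStrictOrderedRing K] {ρ b z : K} (hρ₀ : 0 ≤ ρ)
    (hρ₁ : ρ ≤ 1) (hb : ρ ≤ b) (hz : z ≤ 0) (n : ℕ) : 0 ≤ coeff n (mlSeries ρ b z) := by
  rw [mlSeries_eq_mul_inv]
  refine coeff_mul_nonneg (fun m ↦ ?_) (coeff_inv_nonneg ?_ fun m ↦ ?_) n
  · rw [coeff_oneSubPow_neg]
    exact multichoose_nonneg (sub_nonneg.mpr hb) m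
  · rw [map_sub, constantCoeff_oneSubPow, constantCoeff_C]
    linarith
  · rw [map_sub, ← neg_neg ρ, coeff_oneSubPow_neg, coeff_succ_C, sub_zero]
    exact multichoose_neg_succ_nonpos hρ₀ hρ₁ m

end Resolvent

section GammaSeq

theorem inv_GammaSeq (s : ℝ) (n : ℕ) :
    (GammaSeq s n)⁻¹ = (n + 1) / n ^ s * Ring.multichoose s (n + 1) := by
  rw [GammaSeq, ← factorial_mul_multichoose, inv_div, Nat.factorial_succ]
  push_cast
  field_simp

theorem GammaSeq_pos {s : ℝ} (hs : 0 < s) {n : ℕ} (hn : n ≠ 0) : 0 < GammaSeq s n := by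
  rw [GammaSeq]
  positivity

theorem one_add_div_le_rpow {s : ℝ} (hs : 0 ≤ s) {x : ℝ} (hx : 0 < x) :
    1 + s / (x + 1) ≤ ((x + 1) / x) ^ s := by
  have hlog : 1 / (x + 1) ≤ log ((x + 1) / x) := by
    refine le_of_eq_of_le ?_ (one_sub_inv_le_log_of_pos (by positivity))
    field_simp
    ring
  calc 1 + s / (x + 1) = 1 / (x + 1) * s + 1 := by ring
    _ ≤ log ((x + 1) / x) * s + 1 := by gcongr
    _ ≤ exp (log ((x + 1) / x) * s) := add_one_le_exp _
    _ = ((x + 1) / x) ^ s := (rpow_def_of_pos (by positivity) s).symm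

theorem GammaSeq_succ {s : ℝ} (hs : 0 < s) {n : ℕ} (hn : n ≠ 0) :
    GammaSeq s (n + 1) = ((n + 1) / n) ^ s / (1 + s / (n + 1)) * GammaSeq s n := by
  have hn' : (0 : ℝ) < n := by positivity
  rw [GammaSeq, GammaSeq, Finset.prod_range_succ _ (n + 1), Nat.factorial_succ,
    div_rpow (by positivity) hn'.le]
  push_cast
  field_simp
  ring

theorem monotoneOn_GammaSeq {s : ℝ} (hs : 0 < s) : MonotoneOn (GammaSeq s) (Ici 1) := by
  refine monotoneOn_nat_Ici_of_le_succ fun n hn ↦ ?_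
  have hn₀ : n ≠ 0 := Nat.one_le_iff_ne_zero.mp hn
  rw [GammaSeq_succ hs hn₀]
  refine le_mul_of_one_le_left (GammaSeq_pos hs hn₀).le ((one_le_div (by positivity)).mpr ?_)
  exact one_add_div_le_rpow hs.le (by positivity)

theorem GammaSeq_le_Gamma {s : ℝ} (hs : 0 < s) {n : ℕ} (hn : n ≠ 0) : GammaSeq s n ≤ Gamma s := by
  have hn₁ : 1 ≤ n := Nat.one_le_iff_ne_zero.mpr hn
  refine ge_of_tendsto (GammaSeq_tendsto_Gamma s) ?_
  filter_upwards [eventually_ge_atTop n] with m hm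
  exact monotoneOn_GammaSeq hs hn₁ (hn₁.trans hm) hm

end GammaSeq

section MittagLeffler

theorem hasSum_pow_div_GammaSeq (ρ b : ℝ) {z : ℝ} {n : ℕ} (hn : n ≠ 0) (hz : |z| < n ^ ρ) :
    HasSum (fun k : ℕ ↦ z ^ k / GammaSeq (k * ρ + b) n)
      ((n + 1) / n ^ b * coeff (n + 1) (mlSeries ρ b (z / n ^ ρ))) := by
  have hn' : (0 : ℝ) < n := by positivity
  have hz' : ‖z / (n : ℝ) ^ ρ‖ < 1 := by
    rwa [norm_div, norm_of_nonneg (r := (n : ℝ) ^ ρ) (by positivity), div_lt_one (by positivity)]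
  refine ((hasSum_pow_mul_multichoose ρ b hz' (n + 1)).mul_left _).congr_fun fun k ↦ ?_
  rw [div_eq_mul_inv, inv_GammaSeq, rpow_add hn', mul_comm (k : ℝ) ρ, rpow_mul_natCast hn'.le,
    div_pow]
  field_simp

theorem eventually_ne_zero_and_lt_rpow {ρ : ℝ} (hρ : 0 < ρ) (x : ℝ) :
    ∀ᶠ n : ℕ in atTop, n ≠ 0 ∧ x < (n : ℝ) ^ ρ :=
  (eventually_ne_atTop 0).and <|
    ((tendsto_rpow_atTop hρ).comp tendsto_natCast_atTop_atTop).eventually_gt_atTop x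

theorem norm_pow_div_le {x y : ℝ} (hx : 0 < x) (hxy : x ≤ y) (z : ℝ) (k : ℕ) :
    ‖z ^ k / y‖ ≤ |z| ^ k / x := by
  rw [norm_div, norm_pow, norm_eq_abs, norm_of_nonneg (hx.le.trans hxy)]
  gcongr

theorem summable_pow_div_Gamma {ρ : ℝ} (hρ : 0 < ρ) (β z : ℝ) :
    Summable fun k : ℕ ↦ z ^ k / Gamma (k * ρ + β) := by
  wlog hβ : 0 < β generalizing β
  · obtain ⟨m, hm⟩ := exists_nat_gt (-β / ρ)
    have hβm : 0 < β + m * ρ := by linarith [(div_lt_iff₀ hρ).mp hm]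
    rw [← summable_nat_add_iff m]
    refine ((this (β + m * ρ) hβm).mul_left (z ^ m)).congr fun k ↦ ?_
    rw [pow_add, Nat.cast_add, add_mul, add_assoc, add_comm (m * ρ)]
    ring
  obtain ⟨N, hN, hzN⟩ := (eventually_ne_zero_and_lt_rpow hρ |z|).exists
  refine (hasSum_pow_div_GammaSeq ρ β hN (abs_abs z |>.trans_lt hzN)).summable.of_norm_bounded
    fun k ↦ ?_
  have hs : 0 < k * ρ + β := by positivity
  exact norm_pow_div_le (GammaSeq_pos hs hN) (GammaSeq_le_Gamma hs hN) z k

theorem tendsto_tsum_pow_div_GammaSeq {ρ β : ℝ} (hρ : 0 < ρ) (hβ : 0 < β) (z : ℝ) :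
    Tendsto (fun n ↦ ∑' k : ℕ, z ^ k / GammaSeq (k * ρ + β) n) atTop (𝓝 (mlE ρ β z)) := by
  have hs (k : ℕ) : 0 < k * ρ + β := by positivity
  obtain ⟨N, hN, hzN⟩ := (eventually_ne_zero_and_lt_rpow hρ |z|).exists
  have hN₁ : 1 ≤ N := Nat.one_le_iff_ne_zero.mpr hN
  refine tendsto_tsum_of_dominated_convergence
    (hasSum_pow_div_GammaSeq ρ β hN (abs_abs z |>.trans_lt hzN)).summable (fun k ↦ ?_) ?_
  · exact tendsto_const_nhds.div (GammaSeq_tendsto_Gamma _) (Gamma_pos_of_pos (hs k)).ne'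
  · filter_upwards [eventually_ge_atTop N] with n hn k
    exact norm_pow_div_le (GammaSeq_pos (hs k) hN)
      (monotoneOn_GammaSeq (hs k) hN₁ (hN₁.trans hn) hn) z k

theorem mlE_eq_inv_Gamma_add {ρ : ℝ} (hρ : 0 < ρ) (β z : ℝ) :
    mlE ρ β z = 1 / Gamma β + z * mlE ρ (β + ρ) z := by
  rw [mlE, (summable_pow_div_Gamma hρ β z).tsum_eq_zero_add, mlE, ← tsum_mul_left]
  congr 1
  · simp
  · refine tsum_congr fun k ↦ ?_
    rw [Nat.cast_succ, add_one_mul, add_assoc, add_comm ρ, pow_succ', mul_div_assoc]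

theorem mlE_nonneg {ρ β z : ℝ} (hρ₀ : 0 < ρ) (hρ₁ : ρ ≤ 1) (hβ : ρ ≤ β) (hz : z ≤ 0) :
    0 ≤ mlE ρ β z := by
  refine ge_of_tendsto (tendsto_tsum_pow_div_GammaSeq hρ₀ (hρ₀.trans_le hβ) z) ?_
  filter_upwards [eventually_ne_zero_and_lt_rpow hρ₀ |z|] with n ⟨hn, hzn⟩
  rw [(hasSum_pow_div_GammaSeq ρ β hn hzn).tsum_eq]
  have hz' : z / (n : ℝ) ^ ρ ≤ 0 := div_nonpos_of_nonpos_of_nonneg hz (by positivity)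
  exact mul_nonneg (by positivity) (coeff_mlSeries_nonneg hρ₀.le hρ₁ hβ hz' (n + 1))

theorem mlE_le_inv_Gamma {ρ β z : ℝ} (hρ₀ : 0 < ρ) (hρ₁ : ρ ≤ 1) (hβ : 0 ≤ β) (hz : z ≤ 0) :
    mlE ρ β z ≤ 1 / Gamma β := by
  rw [mlE_eq_inv_Gamma_add hρ₀]
  exact add_le_of_nonpos_right (mul_nonpos_of_nonpos_of_nonneg hz
    (mlE_nonneg hρ₀ hρ₁ (le_add_of_nonneg_left hβ) hz))

end MittagLeffler

/-- If `ρ ∈ (0,1]`, `λ > 0` and `β ≥ ρ`, then for all `t ≥ 0`,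
`0 ≤ E_{ρ,β}(-λ t^ρ) ≤ 1/Γ(β)`. -/
theorem mittagLeffler_nonneg_le (ρ lam β : ℝ) (hρ₀ : 0 < ρ) (hρ₁ : ρ ≤ 1)
    (hlam : 0 < lam) (hβ : ρ ≤ β) (t : ℝ) (ht : 0 ≤ t) :
    0 ≤ mlE ρ β (-lam * t ^ ρ) ∧ mlE ρ β (-lam * t ^ ρ) ≤ 1 / Real.Gamma β := by
  have hz : -lam * t ^ ρ ≤ 0 :=
    mul_nonpos_of_nonpos_of_nonneg (neg_nonpos.mpr hlam.le) (rpow_nonneg ht ρ)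
  exact ⟨mlE_nonneg hρ₀ hρ₁ hβ hz, mlE_le_inv_Gamma hρ₀ hρ₁ (hρ₀.le.trans hβ) hz⟩
end

section
/- Let 0 < ρ < 1, T > 0, l > 0, and fix k ≥ 1 with λ_k = πk/l. Assume σ is continuous on [0,T] with 0 < m_σ ≤ σ(t) ≤ M_σ, q is continuous on [0,T] with q(t) ≥ n_q > -m_σ π²/l², f_k is continuous on [0,T], and φ_k ∈ ℝ. Suppose u_k is continuous on [0,T], differentiable on (0,T), its Caputo derivative D^ρ u_k is continuous on [0,T], and u_k satisfies D^ρ u_k(t) + λ_k² σ(t) u_k(t) + q(t) u_k(t) = f_k(t) on (0,T] with u_k(0) = φ_k. Then: (a) if f_k(t) ≤ 0 on [0,T] and φ_k ≤ 0, then u_k(t) ≤ 0 on [0,T]; (b) if f_k(t) ≥ 0 on [0,T] and φ_k ≥ 0, then u_k(t) ≥ 0 on [0,T]. -/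
/-!
The Caputo derivative of `u` is nonnegative at a point `t > 0` where `u` attains its maximum over
`[0, t]`. If moreover `u t > 0` and `c > 0`, then `D^ρ u t + c t * u t > 0`, which is incompatible
with a nonpositive right-hand side.

For the sign of the Caputo derivative, replace the singular kernel `(t - x) ^ (-ρ)` by
`(t + ε - x) ^ (-ρ)` with `ε > 0`. This kernel is smooth and nondecreasing in `x ∈ [0, t]`, so
writing `deriv u` as the derivative of `u - u t` and integrating by parts produces only nonnegative
terms. Since the shifted kernel is dominated by the singular one, `ε` may tend to `0`.
-/

open Real Set MeasureTheory

/-- The Caputo fractional derivative of order `ρ`: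
`D^ρ h(t) = (1/Γ(1-ρ)) ∫₀^t h'(η) (t-η)^{-ρ} dη`. -/
noncomputable def caputo (ρ : ℝ) (h : ℝ → ℝ) (t : ℝ) : ℝ :=
  (1 / Real.Gamma (1 - ρ)) * ∫ η in (0:ℝ)..t, deriv h η * (t - η) ^ (-ρ)

open Filter Topology

lemma sub_mul_le_integral_deriv_mul {u u' w w' : ℝ → ℝ} {a b : ℝ} (hab : a ≤ b)
    (hu : ContinuousOn u (Icc a b)) (hu' : ∀ x ∈ Ioo a b, HasDerivAt u (u' x) x)
    (hw : ContinuousOn w (Icc a b)) (hw' : ∀ x ∈ Ioo a b, HasDerivAt w (w' x) x)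
    (hw'_nonneg : ∀ x ∈ Ioo a b, 0 ≤ w' x) (hmax : IsMaxOn u (Icc a b) b)
    (hint : IntervalIntegrable (fun x ↦ u' x * w x) volume a b) :
    (u b - u a) * w a ≤ ∫ x in a..b, u' x * w x := by
  have hderiv : ∀ x ∈ Ioo a b,
      HasDerivAt (fun x ↦ (u x - u b) * w x) (u' x * w x + (u x - u b) * w' x) x :=
    fun x hx ↦ ((hu' x hx).sub_const (u b)).mul (hw' x hx)
  have hderiv_le : ∀ x ∈ Ioo a b, u' x * w x + (u x - u b) * w' x ≤ u' x * w x := fun x hx ↦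
    add_le_of_nonpos_right <| mul_nonpos_of_nonpos_of_nonneg
      (sub_nonpos.2 (hmax (Ioo_subset_Icc_self hx))) (hw'_nonneg x hx)
  calc (u b - u a) * w a = (u b - u b) * w b - (u a - u b) * w a := by ring
    _ ≤ ∫ x in a..b, u' x * w x :=
      intervalIntegral.sub_le_integral_of_hasDeriv_right_of_le hab
        ((hu.sub continuousOn_const).mul hw) (fun x hx ↦ (hderiv x hx).hasDerivWithinAt)
        ((intervalIntegrable_iff_integrableOn_Icc_of_le hab).1 hint) hderiv_le

section ShiftedKernel

variable {f : ℝ → ℝ} {a b ρ ε : ℝ}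

lemma norm_mul_shifted_rpow_le {x : ℝ} (hρ : 0 ≤ ρ) (hε : 0 ≤ ε) (hx : x < b) :
    ‖f x * (b + ε - x) ^ (-ρ)‖ ≤ ‖f x * (b - x) ^ (-ρ)‖ := by
  have hbx : 0 < b - x := sub_pos.2 hx
  rw [norm_mul, norm_mul, norm_of_nonneg (rpow_nonneg (by linarith) _),
    norm_of_nonneg (rpow_nonneg hbx.le _)]
  exact mul_le_mul_of_nonneg_left
    (rpow_le_rpow_of_nonpos hbx (by linarith) (neg_nonpos.2 hρ)) (norm_nonneg _)

lemma tendsto_shifted_rpow {x : ℝ} (hx : x < b) :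
    Tendsto (fun ε ↦ (b + ε - x) ^ (-ρ)) (𝓝[>] 0) (𝓝 ((b - x) ^ (-ρ))) := by
  have hcont : ContinuousAt (fun ε : ℝ ↦ (b + ε - x) ^ (-ρ)) 0 :=
    ContinuousAt.rpow_const (by fun_prop) (.inl (by linarith))
  simpa only [add_zero] using hcont.tendsto.mono_left nhdsWithin_le_nhds

lemma ae_lt_of_mem_uIoc (hab : a ≤ b) : ∀ᵐ x : ℝ, x ∈ uIoc a b → x < b := by
  filter_upwards [Measure.ae_ne volume b] with x hxb hx
  rw [uIoc_of_le hab] at hx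
  exact hx.2.lt_of_ne hxb

lemma aestronglyMeasurable_mul_shifted_rpow {μ : Measure ℝ} (hf : AEStronglyMeasurable f μ) :
    AEStronglyMeasurable (fun x ↦ f x * (b + ε - x) ^ (-ρ)) μ :=
  hf.mul (by fun_prop : Measurable fun x : ℝ ↦ (b + ε - x) ^ (-ρ)).aestronglyMeasurable

lemma intervalIntegrable_mul_shifted_rpow (hab : a ≤ b) (hρ : 0 ≤ ρ) (hε : 0 ≤ ε)
    (hf : AEStronglyMeasurable f (volume.restrict (uIoc a b)))
    (hint : IntervalIntegrable (fun x ↦ f x * (b - x) ^ (-ρ)) volume a b) :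
    IntervalIntegrable (fun x ↦ f x * (b + ε - x) ^ (-ρ)) volume a b := by
  refine hint.mono_fun (aestronglyMeasurable_mul_shifted_rpow hf) ?_
  filter_upwards [(ae_restrict_iff' measurableSet_uIoc).2 (ae_lt_of_mem_uIoc hab)] with x hx
  exact norm_mul_shifted_rpow_le hρ hε hx

lemma tendsto_integral_mul_shifted_rpow (hab : a ≤ b) (hρ : 0 ≤ ρ)
    (hf : AEStronglyMeasurable f (volume.restrict (uIoc a b)))
    (hint : IntervalIntegrable (fun x ↦ f x * (b - x) ^ (-ρ)) volume a b) :
    Tendsto (fun ε ↦ ∫ x in a..b, f x * (b + ε - x) ^ (-ρ)) (𝓝[>] 0)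
      (𝓝 (∫ x in a..b, f x * (b - x) ^ (-ρ))) := by
  refine intervalIntegral.tendsto_integral_filter_of_dominated_convergence _
    (Eventually.of_forall fun ε ↦ aestronglyMeasurable_mul_shifted_rpow hf) ?_ hint.norm ?_
  · filter_upwards [self_mem_nhdsWithin] with ε hε
    filter_upwards [ae_lt_of_mem_uIoc hab] with x hx hxab
    exact norm_mul_shifted_rpow_le hρ (mem_Ioi.1 hε).le (hx hxab)
  · filter_upwards [ae_lt_of_mem_uIoc hab] with x hx hxab
    exact (tendsto_shifted_rpow (hx hxab)).const_mul (f x)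

end ShiftedKernel

section ExtremumPrinciple

variable {u : ℝ → ℝ} {a b ρ : ℝ}

lemma sub_mul_rpow_le_integral_deriv_mul_shifted_rpow {ε : ℝ} (hab : a ≤ b) (hρ : 0 ≤ ρ)
    (hε : 0 < ε) (hu : ContinuousOn u (Icc a b)) (hud : DifferentiableOn ℝ u (Ioo a b))
    (hmax : IsMaxOn u (Icc a b) b)
    (hint : IntervalIntegrable (fun x ↦ deriv u x * (b + ε - x) ^ (-ρ)) volume a b) :
    (u b - u a) * (b + ε - a) ^ (-ρ) ≤ ∫ x in a..b, deriv u x * (b + ε - x) ^ (-ρ) := by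
  have hpos : ∀ x ≤ b, 0 < b + ε - x := fun x hx ↦ by linarith
  refine sub_mul_le_integral_deriv_mul (w := fun x ↦ (b + ε - x) ^ (-ρ))
    (w' := fun x ↦ ρ * (b + ε - x) ^ (-ρ - 1)) hab hu
    (fun x hx ↦ (hud.differentiableAt (Ioo_mem_nhds hx.1 hx.2)).hasDerivAt)
    (ContinuousOn.rpow_const (by fun_prop) fun x hx ↦ .inl (hpos x hx.2).ne')
    (fun x hx ↦ ?_) (fun x hx ↦ mul_nonneg hρ (rpow_nonneg (hpos x hx.2.le).le _)) hmax hint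
  convert ((hasDerivAt_id' x).const_sub (b + ε)).rpow_const (.inl (hpos x hx.2.le).ne') using 1
  ring

lemma sub_mul_rpow_le_integral_deriv_mul_rpow (hab : a < b) (hρ : 0 ≤ ρ)
    (hu : ContinuousOn u (Icc a b)) (hud : DifferentiableOn ℝ u (Ioo a b))
    (hmax : IsMaxOn u (Icc a b) b)
    (hint : IntervalIntegrable (fun x ↦ deriv u x * (b - x) ^ (-ρ)) volume a b) :
    (u b - u a) * (b - a) ^ (-ρ) ≤ ∫ x in a..b, deriv u x * (b - x) ^ (-ρ) := by
  have hmeas : AEStronglyMeasurable (deriv u) (volume.restrict (uIoc a b)) :=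
    (measurable_deriv u).aestronglyMeasurable
  refine le_of_tendsto_of_tendsto ((tendsto_shifted_rpow hab).const_mul (u b - u a))
    (tendsto_integral_mul_shifted_rpow hab.le hρ hmeas hint) ?_
  filter_upwards [self_mem_nhdsWithin] with ε hε
  exact sub_mul_rpow_le_integral_deriv_mul_shifted_rpow hab.le hρ hε hu hud hmax
    (intervalIntegrable_mul_shifted_rpow hab.le hρ (mem_Ioi.1 hε).le hmeas hint)

lemma caputo_nonneg_of_isMaxOn {t : ℝ} (hρ₀ : 0 ≤ ρ) (hρ₁ : ρ < 1) (ht : 0 < t)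
    (hu : ContinuousOn u (Icc 0 t)) (hud : DifferentiableOn ℝ u (Ioo 0 t))
    (hmax : IsMaxOn u (Icc 0 t) t) : 0 ≤ caputo ρ u t := by
  have hΓ : 0 < Real.Gamma (1 - ρ) := Gamma_pos_of_pos (sub_pos.2 hρ₁)
  refine mul_nonneg (one_div_nonneg.2 hΓ.le) ?_
  by_cases hint : IntervalIntegrable (fun x ↦ deriv u x * (t - x) ^ (-ρ)) volume 0 t
  · calc 0 ≤ (u t - u 0) * (t - 0) ^ (-ρ) :=
          mul_nonneg (sub_nonneg.2 (hmax (left_mem_Icc.2 ht.le))) (rpow_nonneg (by linarith) _)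
      _ ≤ ∫ x in (0 : ℝ)..t, deriv u x * (t - x) ^ (-ρ) :=
          sub_mul_rpow_le_integral_deriv_mul_rpow ht hρ₀ hu hud hmax hint
  · -- Nothing bounds `deriv u` near `0` and `t`; without integrability the Bochner integral is `0`.
    exact (intervalIntegral.integral_undef hint).ge

end ExtremumPrinciple

lemma caputo_neg (ρ : ℝ) (u : ℝ → ℝ) (t : ℝ) : caputo ρ (-u) t = -caputo ρ u t := by
  simp [caputo, deriv.neg]

section MaximumPrinciple

variable {ρ T : ℝ} {c u : ℝ → ℝ}

lemma nonpos_of_caputo_add_mul_nonpos (hρ₀ : 0 ≤ ρ) (hρ₁ : ρ < 1)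
    (hc : ∀ t ∈ Ioc 0 T, 0 < c t) (hu : ContinuousOn u (Icc 0 T))
    (hud : DifferentiableOn ℝ u (Ioo 0 T))
    (hle : ∀ t ∈ Ioc 0 T, caputo ρ u t + c t * u t ≤ 0) (h0 : u 0 ≤ 0) :
    ∀ t ∈ Icc 0 T, u t ≤ 0 := by
  intro t ht
  obtain ⟨m, hm, hmax⟩ := isCompact_Icc.exists_isMaxOn ⟨t, ht⟩ hu
  refine (hmax ht).trans ?_
  by_contra! hum
  have hm0 : 0 < m := hm.1.lt_of_ne (by rintro rfl; exact h0.not_gt hum)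
  have hcap : 0 ≤ caputo ρ u m :=
    caputo_nonneg_of_isMaxOn hρ₀ hρ₁ hm0 (hu.mono (Icc_subset_Icc_right hm.2))
      (hud.mono (Ioo_subset_Ioo_right hm.2)) (hmax.on_subset (Icc_subset_Icc_right hm.2))
  exact (hle m ⟨hm0, hm.2⟩).not_gt (add_pos_of_nonneg_of_pos hcap (mul_pos (hc m ⟨hm0, hm.2⟩) hum))

theorem solution_sign_preservation_general {f : ℝ → ℝ} (hρ₀ : 0 ≤ ρ) (hρ₁ : ρ < 1)
    (hc : ∀ t ∈ Ioc 0 T, 0 < c t) (hu : ContinuousOn u (Icc 0 T))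
    (hud : DifferentiableOn ℝ u (Ioo 0 T))
    (heq : ∀ t ∈ Ioc 0 T, caputo ρ u t + c t * u t = f t) :
    ((∀ t ∈ Icc 0 T, f t ≤ 0) → u 0 ≤ 0 → ∀ t ∈ Icc 0 T, u t ≤ 0) ∧
    ((∀ t ∈ Icc 0 T, 0 ≤ f t) → 0 ≤ u 0 → ∀ t ∈ Icc 0 T, 0 ≤ u t) := by
  constructor
  · intro hf
    exact nonpos_of_caputo_add_mul_nonpos hρ₀ hρ₁ hc hu hud
      fun t ht ↦ (heq t ht).trans_le (hf t (Ioc_subset_Icc_self ht))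
  · intro hf h0 t ht
    have hneg : ∀ s ∈ Ioc 0 T, caputo ρ (-u) s + c s * (-u) s ≤ 0 := fun s hs ↦
      calc caputo ρ (-u) s + c s * (-u) s = -(caputo ρ u s + c s * u s) := by
            rw [caputo_neg, Pi.neg_apply]; ring
        _ ≤ 0 := neg_nonpos.2 (heq s hs ▸ hf s (Ioc_subset_Icc_self hs))
    exact neg_nonpos.1 <|
      nonpos_of_caputo_add_mul_nonpos hρ₀ hρ₁ hc hu.neg hud.neg hneg (neg_nonpos.2 h0) t ht

end MaximumPrinciple

lemma eigenvalue_mul_add_pos {k l m s r : ℝ} (hk : 1 ≤ k) (hm : 0 ≤ m) (hs : m ≤ s)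
    (hr : -(m * π ^ 2 / l ^ 2) < r) : 0 < (π * k / l) ^ 2 * s + r := by
  have first_le : π ^ 2 / l ^ 2 ≤ (π * k / l) ^ 2 := by
    rw [div_pow]
    gcongr
    exact le_mul_of_one_le_right pi_pos.le hk
  have le_mul : m * π ^ 2 / l ^ 2 ≤ (π * k / l) ^ 2 * s :=
    calc m * π ^ 2 / l ^ 2 = π ^ 2 / l ^ 2 * m := by ring
      _ ≤ (π * k / l) ^ 2 * s := by gcongr
  linarith

/-- Sign preservation for the solution `u_k` of the Cauchy problem
`D^ρ u_k + λ_k² σ(t) u_k + q(t) u_k = f_k(t)`, `u_k(0) = φ_k`: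
(a) if `f_k ≤ 0` on `[0,T]` and `φ_k ≤ 0`, then `u_k ≤ 0` on `[0,T]`;
(b) if `f_k ≥ 0` on `[0,T]` and `φ_k ≥ 0`, then `u_k ≥ 0` on `[0,T]`. -/
theorem solution_sign_preservation (ρ T l : ℝ) (hρ₀ : 0 < ρ) (hρ₁ : ρ < 1)
    (hT : 0 < T) (hl : 0 < l) (k : ℕ) (hk : 1 ≤ k) (lam : ℝ) (hlamdef : lam = π * k / l)
    (σ q fk : ℝ → ℝ) (φk mσ Mσ nq : ℝ)
    (hσc : ContinuousOn σ (Set.Icc 0 T)) (hmσ : 0 < mσ)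
    (hσb : ∀ t ∈ Set.Icc 0 T, mσ ≤ σ t ∧ σ t ≤ Mσ)
    (hqc : ContinuousOn q (Set.Icc 0 T))
    (hnq : -(mσ * π ^ 2 / l ^ 2) < nq)
    (hqb : ∀ t ∈ Set.Icc 0 T, nq ≤ q t)
    (hfk : ContinuousOn fk (Set.Icc 0 T))
    (u : ℝ → ℝ) (hu : ContinuousOn u (Set.Icc 0 T))
    (hud : DifferentiableOn ℝ u (Set.Ioo 0 T))
    (hcap : ContinuousOn (caputo ρ u) (Set.Icc 0 T))
    (heq : ∀ t ∈ Set.Ioc 0 T,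
      caputo ρ u t + lam ^ 2 * σ t * u t + q t * u t = fk t)
    (h0 : u 0 = φk) :
    ((∀ t ∈ Set.Icc 0 T, fk t ≤ 0) → φk ≤ 0 → ∀ t ∈ Set.Icc 0 T, u t ≤ 0) ∧
    ((∀ t ∈ Set.Icc 0 T, 0 ≤ fk t) → 0 ≤ φk → ∀ t ∈ Set.Icc 0 T, 0 ≤ u t) := by
  subst hlamdef h0
  exact solution_sign_preservation_general hρ₀.le hρ₁
    (fun t ht ↦ eigenvalue_mul_add_pos (Nat.one_le_cast.2 hk) hmσ.le
      (hσb t (Ioc_subset_Icc_self ht)).1 (hnq.trans_le (hqb t (Ioc_subset_Icc_self ht))))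
    hu hud (fun t ht ↦ by linear_combination heq t ht)
end
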